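/- Let X^J_n be a Markov chain on a Polish space 𝒳 with kernel p, Δ_n i.i.d. Exp(λ) holding times independent of the chain, J_n = Σ_{k<n} Δ_k the jump times, and X_t the associated pure-jump process. Then for any measurable F: 𝒳 → [0,∞] and t ≥ 0: Σ_{n≥0} E[F(X^J_n) 1_{J_{n+1} ≤ t}] = λ E[∫₀^t F(X_s) ds]. -/

import Mathlib

open MeasureTheory ProbabilityTheory ENNReal Classical

/-- The `n`-step path measure of a Markov chain with initial distribution `μ` and
one-step transition kernel `p`. -/
noncomputable def pathMeasure {𝒳 : Type*} [MeasurableSpace 𝒳] (μ : Measure 𝒳)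
    (p : Kernel 𝒳 𝒳) : (n : ℕ) → Measure (Fin (n + 1) → 𝒳)
  | 0 => μ.map (fun x => fun _ => x)
  | n + 1 => (pathMeasure μ p n).bind
      (fun ω => (p (ω (Fin.last n))).map (fun y => Fin.snoc ω y))

/-- Jump times: `J n ω` is the sum of the first `n` holding times. -/
noncomputable def jumpTime {𝒳 : Type*} (n : ℕ) (ω : ℕ → 𝒳 × ℝ) : ℝ :=
  ∑ k ∈ Finset.range n, (ω k).2

/-- The pure-jump process: `X t ω` is the chain state at the last jump before time `t`. -/
noncomputable def jumpProc {𝒳 : Type*} (t : ℝ) (ω : ℕ → 𝒳 × ℝ) : 𝒳 :=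
  (ω (sSup {n : ℕ | jumpTime n ω ≤ t})).1

/-- The transition kernel of the embedded jump chain:
`p^J((x,s),·) = p(x,dy) × Exp(lam)`. -/
noncomputable def jumpKernel {𝒳 : Type*} [MeasurableSpace 𝒳] (lam : ℝ)
    (p : Kernel 𝒳 𝒳) [IsSFiniteKernel p] : Kernel (𝒳 × ℝ) (𝒳 × ℝ) :=
  (p.comap Prod.fst measurable_fst) ×ₖ (Kernel.const (𝒳 × ℝ) (ProbabilityTheory.expMeasure lam))

open Set in
lemma jp_measurable_snoc {𝒴 : Type*} [MeasurableSpace 𝒴] (n : ℕ) :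
    Measurable (fun q : (Fin (n + 1) → 𝒴) × 𝒴 => (Fin.snoc q.1 q.2 : Fin (n + 2) → 𝒴)) := by
  rw [measurable_pi_iff]
  intro i
  refine Fin.lastCases ?_ (fun i => ?_) i
  · simp only [Fin.snoc_last]; exact measurable_snd
  · simp only [Fin.snoc_castSucc]; exact (measurable_pi_apply i).comp measurable_fst

lemma jp_measurable_snoc' {𝒴 : Type*} [MeasurableSpace 𝒴] (n : ℕ) (v : Fin (n + 1) → 𝒴) :
    Measurable (fun y : 𝒴 => (Fin.snoc v y : Fin (n + 2) → 𝒴)) :=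
  (jp_measurable_snoc n).comp measurable_prodMk_left

lemma jp_lintegral_path_succ {𝒴 : Type*} [MeasurableSpace 𝒴] (μ : Measure 𝒴)
    (κ : Kernel 𝒴 𝒴) [IsMarkovKernel κ] (n : ℕ) (f : (Fin (n + 2) → 𝒴) → ℝ≥0∞)
    (hf : Measurable f) :
    ∫⁻ v, f v ∂(pathMeasure μ κ (n + 1)) =
      ∫⁻ v, ∫⁻ y, f (Fin.snoc v y) ∂(κ (v (Fin.last n))) ∂(pathMeasure μ κ n) := by
  have hm : Measurable (fun ω : Fin (n + 1) → 𝒴 => (κ (ω (Fin.last n))).map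
      (fun y => (Fin.snoc ω y : Fin (n + 2) → 𝒴))) := by
    refine Measure.measurable_of_measurable_coe _ (fun s hs => ?_)
    have h1 : ∀ ω : Fin (n + 1) → 𝒴, (κ (ω (Fin.last n))).map
      (fun y => (Fin.snoc ω y : Fin (n + 2) → 𝒴)) s =
        (κ.comap (fun ω : Fin (n + 1) → 𝒴 => ω (Fin.last n)) (measurable_pi_apply _)) ω
          (Prod.mk ω ⁻¹' ((fun q : (Fin (n + 1) → 𝒴) × 𝒴 =>
            (Fin.snoc q.1 q.2 : Fin (n + 2) → 𝒴)) ⁻¹' s)) := by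
      intro ω
      rw [Measure.map_apply (jp_measurable_snoc' n ω) hs]
      rfl
    simp_rw [h1]
    exact Kernel.measurable_kernel_prodMk_left (jp_measurable_snoc n hs)
  rw [pathMeasure, Measure.lintegral_bind hm.aemeasurable hf.aemeasurable]
  refine lintegral_congr fun v => ?_
  rw [lintegral_map hf (jp_measurable_snoc' n v)]

lemma jp_step {𝒳 : Type*} [MeasurableSpace 𝒳] (lam : ℝ) (hlam : 0 < lam)
    (p : Kernel 𝒳 𝒳) [IsMarkovKernel p] (π : Measure 𝒳) [IsProbabilityMeasure π] (n : ℕ)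
    (Φ : 𝒳 × ℝ × ℝ → ℝ≥0∞) (hΦ : Measurable Φ) :
    ∫⁻ v, Φ ((v (Fin.last n)).1, ∑ i : Fin n, (v i.castSucc).2, (v (Fin.last n)).2)
        ∂(pathMeasure (π.prod (expMeasure lam)) (jumpKernel lam p) n) =
      ∫⁻ v, ∫⁻ d, Φ ((v (Fin.last n)).1, ∑ i : Fin n, (v i.castSucc).2, d) ∂(expMeasure lam)
        ∂(pathMeasure (π.prod (expMeasure lam)) (jumpKernel lam p) n) := by
  have := isProbabilityMeasure_expMeasure hlam
  have hΨ : Measurable (fun q : 𝒳 × ℝ => ∫⁻ d, Φ (q.1, q.2, d) ∂(expMeasure lam)) :=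
    Measurable.lintegral_prod_right' (f := fun q : (𝒳 × ℝ) × ℝ => Φ (q.1.1, q.1.2, q.2))
      (by fun_prop)
  have : IsMarkovKernel (jumpKernel lam p) := by unfold jumpKernel; infer_instance
  cases n with
  | zero =>
    have hmap : Measurable (fun (x : 𝒳 × ℝ) => (fun _ => x : Fin 1 → 𝒳 × ℝ)) := by fun_prop
    simp only [pathMeasure]
    rw [lintegral_map (by fun_prop) hmap, lintegral_map _ hmap]
    · simp only [Finset.univ_eq_empty, Finset.sum_empty]
      rw [lintegral_prod _ (by fun_prop), lintegral_prod]
      · simp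
      · exact (hΨ.comp (f := fun q : 𝒳 × ℝ => (q.1, (0:ℝ))) (by fun_prop)).aemeasurable
    · exact hΨ.comp (g := fun q : 𝒳 × ℝ => _) (f := fun v : Fin 1 → 𝒳 × ℝ =>
        ((v (Fin.last 0)).1, ∑ i : Fin 0, (v i.castSucc).2)) (by fun_prop)
  | succ n =>
    rw [jp_lintegral_path_succ _ _ _ _ (by fun_prop), jp_lintegral_path_succ]
    · refine lintegral_congr fun v => ?_
      simp only [Fin.snoc_last, Fin.snoc_castSucc]
      have : jumpKernel lam p (v (Fin.last n)) =
        (p (v (Fin.last n)).1).prod (expMeasure lam) := by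
        rw [jumpKernel, Kernel.prod_apply]; rfl
      rw [this, lintegral_prod _ (by fun_prop), lintegral_prod]
      · simp
      · exact (hΨ.comp (f := fun q : 𝒳 × ℝ => (q.1, ∑ i, (v i).2)) (by fun_prop)).aemeasurable
    · exact hΨ.comp (f := fun v : Fin (n + 2) → 𝒳 × ℝ =>
        ((v (Fin.last (n+1))).1, ∑ i : Fin (n+1), (v i.castSucc).2)) (by fun_prop)

lemma jp_measurable_jumpTime {𝒳 : Type*} [MeasurableSpace 𝒳] (n : ℕ) :
    Measurable (fun ω : ℕ → 𝒳 × ℝ => jumpTime n ω) := by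
  unfold jumpTime; fun_prop

lemma jp_step' {𝒳 : Type*} [MeasurableSpace 𝒳] (lam : ℝ) (hlam : 0 < lam)
    (p : Kernel 𝒳 𝒳) [IsMarkovKernel p] (π : Measure 𝒳) [IsProbabilityMeasure π]
    (Pπ : Measure (ℕ → 𝒳 × ℝ))
    (HP : ∀ n : ℕ, Pπ.map (fun ω (i : Fin (n + 1)) => ω i) =
      pathMeasure (π.prod (ProbabilityTheory.expMeasure lam)) (jumpKernel lam p) n)
    (n : ℕ) (Φ : 𝒳 × ℝ × ℝ → ℝ≥0∞) (hΦ : Measurable Φ) :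
    ∫⁻ ω, Φ ((ω n).1, jumpTime n ω, (ω n).2) ∂Pπ =
      ∫⁻ ω, ∫⁻ d, Φ ((ω n).1, jumpTime n ω, d) ∂(expMeasure lam) ∂Pπ := by
  have := isProbabilityMeasure_expMeasure hlam
  have hΨ : Measurable (fun q : 𝒳 × ℝ => ∫⁻ d, Φ (q.1, q.2, d) ∂(expMeasure lam)) :=
    Measurable.lintegral_prod_right' (f := fun q : (𝒳 × ℝ) × ℝ => Φ (q.1.1, q.1.2, q.2))
      (by fun_prop)
  have h := jp_step lam hlam p π n Φ hΦ
  have hr : Measurable (fun (ω : ℕ → 𝒳 × ℝ) (i : Fin (n + 1)) => ω i) := by fun_prop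
  rw [← HP n, lintegral_map (by fun_prop) hr, lintegral_map _ hr] at h
  · simpa only [jumpTime, Finset.sum_range, Fin.val_last, Fin.val_castSucc] using h
  · exact hΨ.comp (f := fun v : Fin (n + 1) → 𝒳 × ℝ =>
        ((v (Fin.last n)).1, ∑ i : Fin n, (v i.castSucc).2)) (by fun_prop)

open Set in
lemma jp_exp_Ioi (lam : ℝ) (hlam : 0 < lam) (u : ℝ) (hu : 0 ≤ u) :
    ENNReal.ofReal lam * expMeasure lam (Ioi u) = exponentialPDF lam u := by
  have := isProbabilityMeasure_expMeasure hlam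
  have h1 : expMeasure lam (Iic u) = ENNReal.ofReal (1 - Real.exp (-(lam * u))) := by
    rw [← ofReal_cdf, cdf_expMeasure_eq hlam, if_pos hu]
  rw [← compl_Iic, prob_compl_eq_one_sub measurableSet_Iic, h1, exponentialPDF_of_nonneg hu,
    ENNReal.ofReal_mul hlam.le, ← ENNReal.ofReal_one, ← ENNReal.ofReal_sub]
  · simp
  · have : 0 ≤ lam * u := by positivity
    simp [this]

lemma jp_measurable_pdf (lam : ℝ) : Measurable (exponentialPDF lam) := by
  unfold exponentialPDF; fun_prop

/-- Time spent in `[0,t]` by the interval `[j,j+d)`. -/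
noncomputable def jpTime (t j d : ℝ) : ℝ≥0∞ :=
  ∫⁻ s in Set.Icc (0 : ℝ) t, if j ≤ s ∧ s < j + d then 1 else 0

lemma jp_measurable_time (t : ℝ) : Measurable (fun q : ℝ × ℝ => jpTime t q.1 q.2) := by
  unfold jpTime
  refine Measurable.lintegral_prod_right'
    (f := fun q : (ℝ × ℝ) × ℝ => if q.1.1 ≤ q.2 ∧ q.2 < q.1.1 + q.1.2 then (1 : ℝ≥0∞) else 0) ?_
  refine Measurable.ite ?_ measurable_const measurable_const
  exact MeasurableSet.inter (s₁ := {q : (ℝ × ℝ) × ℝ | q.1.1 ≤ q.2})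
    (s₂ := {q : (ℝ × ℝ) × ℝ | q.2 < q.1.1 + q.1.2})
    (measurableSet_le (by fun_prop) (by fun_prop)) (measurableSet_lt (by fun_prop) (by fun_prop))

open Set in
lemma jp_exp_time (lam : ℝ) (hlam : 0 < lam) (t j : ℝ) (hj : 0 ≤ j) :
    ENNReal.ofReal lam * ∫⁻ d, jpTime t j d ∂(expMeasure lam) =
      ∫⁻ d, (if j + d ≤ t then 1 else 0) ∂(expMeasure lam) := by
  have := isProbabilityMeasure_expMeasure hlam
  have hR : ∫⁻ d, (if j + d ≤ t then 1 else 0) ∂(expMeasure lam) =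
      ∫⁻ u in Iic (t - j), exponentialPDF lam u := by
    have h1 : (fun d : ℝ => if j + d ≤ t then (1 : ℝ≥0∞) else 0) =
        (Iic (t - j)).indicator 1 := by
      ext d
      simp only [indicator_apply, mem_Iic, Pi.one_apply, le_sub_iff_add_le, add_comm]
    rw [h1, lintegral_indicator_one measurableSet_Iic]
    exact withDensity_apply _ measurableSet_Iic
  have hs : ∫⁻ u in Iic (t - j), exponentialPDF lam u =
      ∫⁻ s in Iic t, exponentialPDF lam (s - j) := by
    rw [← lintegral_indicator measurableSet_Iic, ← lintegral_indicator measurableSet_Iic,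
      ← lintegral_sub_right_eq_self _ j]
    refine lintegral_congr fun s => ?_
    simp only [indicator_apply, mem_Iic, sub_le_sub_iff_right]
  have hs2 : ∫⁻ s in Iic t, exponentialPDF lam (s - j) =
      ∫⁻ s in Icc 0 t, exponentialPDF lam (s - j) := by
    rw [← lintegral_indicator measurableSet_Iic, ← lintegral_indicator measurableSet_Icc]
    refine lintegral_congr fun s => ?_
    by_cases h0 : 0 ≤ s
    · simp [indicator_apply, h0]
    · simp only [indicator_apply, mem_Iic, mem_Icc, h0, false_and, if_false]
      rw [exponentialPDF_of_neg (by linarith)]; simp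
  rw [hR, hs, hs2]
  unfold jpTime
  rw [lintegral_lintegral_swap]
  · rw [← lintegral_const_mul']
    · refine lintegral_congr fun s => ?_
      by_cases hjs : j ≤ s
      · have h1 : (fun d : ℝ => if j ≤ s ∧ s < j + d then (1 : ℝ≥0∞) else 0) =
          (Ioi (s - j)).indicator 1 := by
          ext d
          simp only [indicator_apply, mem_Ioi, Pi.one_apply, hjs, true_and, sub_lt_iff_lt_add']
        rw [h1, lintegral_indicator_one measurableSet_Ioi, jp_exp_Ioi lam hlam _ (by linarith)]
      · rw [exponentialPDF_of_neg (by linarith)]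
        simp [hjs]
    · exact ENNReal.ofReal_ne_top
  · refine Measurable.aemeasurable (Measurable.ite ?_ measurable_const measurable_const)
    exact MeasurableSet.inter (s₁ := {q : ℝ × ℝ | j ≤ q.2})
      (s₂ := {q : ℝ × ℝ | q.2 < j + q.1})
      (measurableSet_le (by fun_prop) (by fun_prop)) (measurableSet_lt (by fun_prop) (by fun_prop))

lemma jp_jumpTime_succ {𝒳 : Type*} (n : ℕ) (ω : ℕ → 𝒳 × ℝ) :
    jumpTime (n + 1) ω = jumpTime n ω + (ω n).2 := by
  simp [jumpTime, Finset.sum_range_succ]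

lemma jp_mono {𝒳 : Type*} (ω : ℕ → 𝒳 × ℝ) (h : ∀ n, 0 ≤ (ω n).2) :
    Monotone (fun n => jumpTime n ω) :=
  monotone_nat_of_le_succ fun n => by rw [jp_jumpTime_succ]; linarith [h n]

lemma jp_unique {𝒳 : Type*} (ω : ℕ → 𝒳 × ℝ) (h : ∀ n, 0 ≤ (ω n).2) (s : ℝ) (N m : ℕ)
    (h1 : jumpTime N ω ≤ s ∧ s < jumpTime N ω + (ω N).2)
    (h2 : jumpTime m ω ≤ s ∧ s < jumpTime m ω + (ω m).2) : m = N := by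
  rw [← jp_jumpTime_succ] at h1 h2
  have hm := jp_mono ω h
  rcases lt_trichotomy m N with hlt | rfl | hlt
  · have : jumpTime (m + 1) ω ≤ jumpTime N ω := hm hlt
    linarith
  · rfl
  · have : jumpTime (N + 1) ω ≤ jumpTime m ω := hm hlt
    linarith

lemma jp_ae_nonneg {𝒳 : Type*} [MeasurableSpace 𝒳] (lam : ℝ) (hlam : 0 < lam)
    (p : Kernel 𝒳 𝒳) [IsMarkovKernel p] (π : Measure 𝒳) [IsProbabilityMeasure π]
    (Pπ : Measure (ℕ → 𝒳 × ℝ))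
    (HP : ∀ n : ℕ, Pπ.map (fun ω (i : Fin (n + 1)) => ω i) =
      pathMeasure (π.prod (ProbabilityTheory.expMeasure lam)) (jumpKernel lam p) n) :
    ∀ᵐ ω ∂Pπ, ∀ n, 0 ≤ (ω n).2 := by
  rw [ae_all_iff]
  intro n
  have hms : MeasurableSet {q : 𝒳 × ℝ × ℝ | q.2.2 < 0} :=
    measurableSet_lt (by fun_prop) (by fun_prop)
  have hm : Measurable (fun q : 𝒳 × ℝ × ℝ => if q.2.2 < 0 then (1 : ℝ≥0∞) else 0) :=
    Measurable.ite hms measurable_const measurable_const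
  have h := jp_step' lam hlam p π Pπ HP n _ hm
  have h0 : ∫⁻ d : ℝ, (if d < 0 then (1 : ℝ≥0∞) else 0) ∂(expMeasure lam) = 0 := by
    have h1 : (fun d : ℝ => if d < 0 then (1 : ℝ≥0∞) else 0) = (Set.Iio 0).indicator 1 := by
      ext d; simp [Set.indicator_apply]
    rw [h1, lintegral_indicator_one measurableSet_Iio]
    exact (withDensity_apply _ measurableSet_Iio).trans
      (lintegral_exponentialPDF_of_nonpos le_rfl)
  simp only [h0, lintegral_zero] at h
  rw [lintegral_eq_zero_iff] at h
  · filter_upwards [h] with ω hω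
    by_contra hc
    simp [not_le.mp hc] at hω
  · exact hm.comp (f := fun ω : ℕ → 𝒳 × ℝ => ((ω n).1, jumpTime n ω, (ω n).2))
      (by have := jp_measurable_jumpTime (𝒳 := 𝒳) n; fun_prop)

lemma jp_term {𝒳 : Type*} [MeasurableSpace 𝒳] (lam : ℝ) (hlam : 0 < lam)
    (p : Kernel 𝒳 𝒳) [IsMarkovKernel p] (π : Measure 𝒳) [IsProbabilityMeasure π]
    (Pπ : Measure (ℕ → 𝒳 × ℝ))
    (HP : ∀ n : ℕ, Pπ.map (fun ω (i : Fin (n + 1)) => ω i) =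
      pathMeasure (π.prod (ProbabilityTheory.expMeasure lam)) (jumpKernel lam p) n)
    (F : 𝒳 → ℝ≥0∞) (hF : Measurable F) (t : ℝ) (n : ℕ) :
    ∫⁻ ω, (if jumpTime (n + 1) ω ≤ t then F ((ω n).1) else 0) ∂Pπ =
      ENNReal.ofReal lam * ∫⁻ ω, F ((ω n).1) * jpTime t (jumpTime n ω) (ω n).2 ∂Pπ := by
  have hT := jp_measurable_time t
  have hm1 : Measurable (fun q : 𝒳 × ℝ × ℝ => F q.1 * (if q.2.1 + q.2.2 ≤ t then 1 else 0)) :=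
    (hF.comp measurable_fst).mul (Measurable.ite (measurableSet_le (by fun_prop) (by fun_prop))
      measurable_const measurable_const)
  have hm2 : Measurable (fun q : 𝒳 × ℝ × ℝ => F q.1 * jpTime t q.2.1 q.2.2) :=
    (hF.comp measurable_fst).mul (hT.comp measurable_snd)
  have e1 := jp_step' lam hlam p π Pπ HP n _ hm1
  have e2 := jp_step' lam hlam p π Pπ HP n _ hm2
  have e0 : ∀ ω : ℕ → 𝒳 × ℝ, (if jumpTime (n + 1) ω ≤ t then F ((ω n).1) else 0) =
      F (ω n).1 * (if jumpTime n ω + (ω n).2 ≤ t then 1 else 0) := by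
    intro ω; rw [jp_jumpTime_succ]; split_ifs <;> simp
  simp_rw [e0]
  simp only at e1 e2
  rw [e1, e2, ← lintegral_const_mul' _ _ ENNReal.ofReal_ne_top]
  refine lintegral_congr_ae ?_
  filter_upwards [jp_ae_nonneg lam hlam p π Pπ HP] with ω hω
  have hj : 0 ≤ jumpTime n ω := Finset.sum_nonneg fun k _ => hω k
  rw [lintegral_const_mul, lintegral_const_mul, ← jp_exp_time lam hlam t _ hj]
  · ring
  · exact hT.comp measurable_prodMk_left
  · exact Measurable.ite (measurableSet_le (by fun_prop) (by fun_prop))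
      measurable_const measurable_const

lemma jp_measurable_ind (j d : ℝ) :
    Measurable (fun s : ℝ => if j ≤ s ∧ s < j + d then (1 : ℝ≥0∞) else 0) :=
  Measurable.ite measurableSet_Ico measurable_const measurable_const

lemma jp_measurable_term {𝒳 : Type*} [MeasurableSpace 𝒳] (F : 𝒳 → ℝ≥0∞) (hF : Measurable F)
    (t : ℝ) (n : ℕ) : Measurable (fun ω : ℕ → 𝒳 × ℝ =>
      F ((ω n).1) * jpTime t (jumpTime n ω) (ω n).2) := by
  have h := jp_measurable_jumpTime (𝒳 := 𝒳) n
  exact (hF.comp (by fun_prop)).mul ((jp_measurable_time t).comp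
    (f := fun ω : ℕ → 𝒳 × ℝ => (jumpTime n ω, (ω n).2)) (by fun_prop))

lemma jp_sum_le {𝒳 : Type*} (ω : ℕ → 𝒳 × ℝ) (h : ∀ n, 0 ≤ (ω n).2) (t : ℝ) :
    ∑' n, jpTime t (jumpTime n ω) (ω n).2 ≤ ENNReal.ofReal t := by
  unfold jpTime
  rw [← lintegral_tsum fun n => (jp_measurable_ind _ _).aemeasurable]
  calc _ ≤ ∫⁻ s in Set.Icc (0 : ℝ) t, 1 := by
        refine lintegral_mono fun s => ?_
        by_cases hs : ∃ N, jumpTime N ω ≤ s ∧ s < jumpTime N ω + (ω N).2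
        · obtain ⟨N, hN⟩ := hs
          simp only
          rw [tsum_eq_single N]
          · simp [hN]
          · intro m hm
            rw [if_neg fun h2 => hm (jp_unique ω h s N m hN h2)]
        · push Not at hs
          have : ∀ n, ¬ (jumpTime n ω ≤ s ∧ s < jumpTime n ω + (ω n).2) :=
            fun n hn => absurd hn.2 (not_lt.mpr (hs n hn.1))
          simp [this]
    _ = _ := by simp

lemma jp_ae_finite {𝒳 : Type*} [MeasurableSpace 𝒳] (lam : ℝ) (hlam : 0 < lam)
    (p : Kernel 𝒳 𝒳) [IsMarkovKernel p] (π : Measure 𝒳) [IsProbabilityMeasure π]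
    (Pπ : Measure (ℕ → 𝒳 × ℝ)) [IsProbabilityMeasure Pπ]
    (HP : ∀ n : ℕ, Pπ.map (fun ω (i : Fin (n + 1)) => ω i) =
      pathMeasure (π.prod (ProbabilityTheory.expMeasure lam)) (jumpKernel lam p) n) (t : ℝ) :
    ∀ᵐ ω ∂Pπ, {n | jumpTime (n + 1) ω ≤ t}.Finite := by
  refine ae_finite_setOfPred_mem (s := fun n => {ω | jumpTime (n + 1) ω ≤ t}) ?_
  have h1 : ∀ n, Pπ {ω | jumpTime (n + 1) ω ≤ t} =
      ENNReal.ofReal lam * ∫⁻ ω, 1 * jpTime t (jumpTime n ω) (ω n).2 ∂Pπ := by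
    intro n
    rw [← jp_term lam hlam p π Pπ HP (fun _ => 1) measurable_const t n,
      ← lintegral_indicator_one (measurableSet_le (jp_measurable_jumpTime _) measurable_const)]
    refine lintegral_congr fun ω => ?_
    simp [Set.indicator_apply]
  simp_rw [h1]
  rw [ENNReal.tsum_mul_left, ← lintegral_tsum fun n =>
    (jp_measurable_term (fun _ => 1) measurable_const t n).aemeasurable]
  refine ENNReal.mul_ne_top ENNReal.ofReal_ne_top (ne_top_of_le_ne_top
    (b := ∫⁻ _, ENNReal.ofReal t ∂Pπ) (by simp) (lintegral_mono_ae ?_))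
  filter_upwards [jp_ae_nonneg lam hlam p π Pπ HP] with ω hω
  simpa using jp_sum_le ω hω t

lemma jp_proc {𝒳 : Type*} (ω : ℕ → 𝒳 × ℝ) (h : ∀ n, 0 ≤ (ω n).2) (t s : ℝ)
    (hs : s ∈ Set.Icc 0 t) (hfin : {n | jumpTime (n + 1) ω ≤ t}.Finite) (F : 𝒳 → ℝ≥0∞) :
    F (jumpProc s ω) = ∑' n, F (ω n).1 *
      (if jumpTime n ω ≤ s ∧ s < jumpTime n ω + (ω n).2 then 1 else 0) := by
  have hb : BddAbove {n : ℕ | jumpTime n ω ≤ s} := by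
    obtain ⟨B, hB⟩ := hfin.bddAbove
    refine ⟨B + 1, fun n hn => ?_⟩
    cases n with
    | zero => omega
    | succ n =>
      have : n ≤ B := hB (show jumpTime (n + 1) ω ≤ t from le_trans hn hs.2)
      omega
  have hne : {n : ℕ | jumpTime n ω ≤ s}.Nonempty := ⟨0, by simpa [jumpTime] using hs.1⟩
  have hmem := Nat.sSup_mem hne hb
  unfold jumpProc
  set N := sSup {n : ℕ | jumpTime n ω ≤ s} with hN
  have hlt : s < jumpTime N ω + (ω N).2 := by
    rw [← jp_jumpTime_succ]
    by_contra hc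
    have : N + 1 ≤ N := le_csSup hb (not_lt.mp hc)
    omega
  have hmem' : jumpTime N ω ≤ s := hmem
  rw [tsum_eq_single N]
  · simp [hmem', hlt]
  · intro m hm
    rw [if_neg fun h2 => hm (jp_unique ω h s N m ⟨hmem', hlt⟩ h2), mul_zero]

/-- Time-integral identity for the pure-jump process: for measurable `F : 𝒳 → [0,∞]`
and `t ≥ 0`, `Σ_n E[F(X^J_n) 1_{J_{n+1} ≤ t}] = λ E[∫₀^t F(X_s) ds]`. -/
theorem jump_process_time_integral {𝒳 : Type*} [MeasurableSpace 𝒳]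
    [TopologicalSpace 𝒳] [PolishSpace 𝒳] [BorelSpace 𝒳]
    (lam : ℝ) (hlam : 0 < lam)
    (p : Kernel 𝒳 𝒳) [IsMarkovKernel p]
    (π : Measure 𝒳) [IsProbabilityMeasure π]
    (Pπ : Measure (ℕ → 𝒳 × ℝ)) [IsProbabilityMeasure Pπ]
    (HP : ∀ n : ℕ, Pπ.map (fun ω (i : Fin (n + 1)) => ω i) =
      pathMeasure (π.prod (ProbabilityTheory.expMeasure lam)) (jumpKernel lam p) n)
    (F : 𝒳 → ℝ≥0∞) (hF : Measurable F) (t : ℝ) (ht : 0 ≤ t) :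
    ∑' n : ℕ, ∫⁻ ω, (if jumpTime (n + 1) ω ≤ t then F ((ω n).1) else 0) ∂Pπ =
      ENNReal.ofReal lam * ∫⁻ ω, (∫⁻ s in Set.Icc (0 : ℝ) t, F (jumpProc s ω)) ∂Pπ := by
  simp_rw [jp_term lam hlam p π Pπ HP F hF t]
  rw [ENNReal.tsum_mul_left, ← lintegral_tsum fun n =>
    (jp_measurable_term F hF t n).aemeasurable]
  congr 1
  refine lintegral_congr_ae ?_
  filter_upwards [jp_ae_nonneg lam hlam p π Pπ HP, jp_ae_finite lam hlam p π Pπ HP t] with ω hω hfin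
  rw [setLIntegral_congr_fun measurableSet_Icc fun s hs => jp_proc ω hω t s hs hfin F,
    lintegral_tsum fun n => ((jp_measurable_ind _ _).const_mul _).aemeasurable]
  refine tsum_congr fun n => ?_
  rw [lintegral_const_mul _ (jp_measurable_ind _ _), jpTime]
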